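/- arXiv:1309.0595 — 2 statements merged into one kernel-verified Lean document; each statement's English description precedes it below -/
import Mathlib

section
/- For every real number z with 0 ≤ z < 2/(3√3), the series ∑_{n≥0} C(3n/2 + 1, n) z^n/(3n/2 + 1) converges and equals 3/(√3 cos β − sin β)², where β = (1/3)·arcsin(3√3 z/2). -/
open Real

/-- Generalized binomial coefficient `C(a,n) = a(a-1)⋯(a-n+1)/n!`. -/
noncomputable def gbinom (a : ℝ) (n : ℕ) : ℝ :=
  (∏ i ∈ Finset.range n, (a - i)) / (n.factorial : ℝ)

lemma hs_congr {f g : ℕ → ℝ} {a b : ℝ} (h : HasSum f a) (hf : ∀ n, g n = f n) (hb : b = a) :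
    HasSum g b := by
  obtain rfl : g = f := funext hf
  rw [hb]; exact h

lemma ps_deriv (c : ℕ → ℝ) (M : ℝ) (j : ℕ) (hc : ∀ n, |c n| ≤ M * ((n : ℝ) + 1) ^ j)
    (s : ℝ) (hs : |s| < 1) :
    (Summable fun n => c n * s ^ n) ∧
    HasDerivAt (fun x => ∑' n, c n * x ^ n) (∑' n : ℕ, ((n : ℝ) + 1) * c (n + 1) * s ^ n) s := by
  have key : ∀ (r : ℝ), 0 < r → r < 1 → ∀ m : ℕ,
      Summable (fun n : ℕ => M * ((n : ℝ) + 1) ^ m * r ^ n) := by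
    intro r hr0 hr m
    have h1 : Summable (fun n : ℕ => ((n : ℝ)) ^ m * r ^ n) :=
      summable_pow_mul_geometric_of_norm_lt_one m (by rwa [Real.norm_of_nonneg hr0.le])
    have h2 := (summable_nat_add_iff 1).2 h1
    have h3 := h2.mul_left (M / r)
    refine h3.congr fun n => ?_
    push_cast
    field_simp
    ring
  have hM : 0 ≤ M := by
    have := (abs_nonneg _).trans (hc 0)
    simpa using this
  obtain ⟨r, hsr, hr1⟩ := exists_between hs
  have hr0 : 0 < r := (abs_nonneg s).trans_lt hsr
  have sm : ∀ x : ℝ, |x| < r → Summable fun n => c n * x ^ n := by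
    intro x hx
    refine Summable.of_norm_bounded (key r hr0 hr1 j) fun n => ?_
    rw [Real.norm_eq_abs, abs_mul, abs_pow]
    have := hc n
    gcongr
  refine ⟨sm s hsr, ?_⟩
  have hsum : Summable (fun n : ℕ => (M / r) * ((n : ℝ) + 1) ^ (j + 1) * r ^ n) := by
    refine ((key r hr0 hr1 (j + 1)).mul_left (1 / r)).congr fun n => ?_
    ring
  have bd : ∀ (n : ℕ) (y : ℝ), |y| < r → ‖c n * ((n : ℝ) * y ^ (n - 1))‖ ≤
      (M / r) * ((n : ℝ) + 1) ^ (j + 1) * r ^ n := by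
    intro n y hy
    rw [Real.norm_eq_abs, abs_mul, abs_mul, abs_pow, Nat.abs_cast]
    rcases n with _ | n
    · simp; positivity
    · have h1 := hc (n + 1)
      have h2 : |y| ^ n ≤ r ^ n := by gcongr
      have h3 : ((n + 1 : ℕ) : ℝ) ≤ ((n + 1 : ℕ) : ℝ) + 1 := by linarith
      calc _ ≤ (M * (((n + 1 : ℕ) : ℝ) + 1) ^ j) * ((((n + 1 : ℕ) : ℝ) + 1) * r ^ n) := by
            simp only [Nat.add_sub_cancel]
            gcongr
        _ = _ := by field_simp; ring
  have hd := hasDerivAt_tsum_of_isPreconnected (g := fun n x => c n * x ^ n)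
    (g' := fun n y => c n * ((n : ℝ) * y ^ (n - 1))) (t := Metric.ball (0 : ℝ) r)
    hsum Metric.isOpen_ball (convex_ball _ _).isPreconnected
    (fun n y _ => (hasDerivAt_pow n y).const_mul (c n))
    (fun n y hy => bd n y (by simpa using hy))
    (y₀ := 0) (by simpa using hr0) (sm 0 (by simpa using hr0)) (y := s) (by simpa using hsr)
  refine hd.congr_deriv ?_
  have hs2 : Summable (fun n : ℕ => c n * ((n : ℝ) * s ^ (n - 1))) :=
    Summable.of_norm_bounded hsum fun n => bd n s hsr
  rw [hs2.tsum_eq_zero_add]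
  simp only [Nat.cast_zero, zero_mul, mul_zero, zero_add]
  refine tsum_congr fun n => ?_
  simp only [Nat.add_sub_cancel]
  push_cast
  ring

lemma ps_trig (c : ℕ → ℝ) (k : ℝ) (hk : k ≠ 0) (hk2 : k ^ 2 ≤ 2)
    (rec : ∀ n : ℕ, ((n : ℝ) + 2) * (n + 1) * c (n + 2) = ((n : ℝ) ^ 2 - k ^ 2) * c n)
    (t : ℝ) (ht0 : 0 ≤ t) (ht : t < π / 2) :
    HasSum (fun n => c n * sin t ^ n) (c 0 * cos (k * t) + c 1 / k * sin (k * t)) := by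
  set M := max |c 0| |c 1| with hMdef
  have hM : 0 ≤ M := (abs_nonneg _).trans (le_max_left _ _)
  have hc2 : ∀ n, |c n| ≤ M ∧ |c (n + 1)| ≤ M := by
    intro n
    induction n with
    | zero => exact ⟨le_max_left _ _, le_max_right _ _⟩
    | succ n ih =>
      refine ⟨ih.2, ?_⟩
      have h := congrArg abs (rec n)
      rw [abs_mul _ (c (n + 2)), abs_mul _ (c n), abs_of_pos (by positivity : (0 : ℝ) < ((n : ℝ) + 2) * (n + 1))] at h
      have h1 : |(n : ℝ) ^ 2 - k ^ 2| ≤ ((n : ℝ) + 2) * (n + 1) := by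
        have : (0 : ℝ) ≤ n := n.cast_nonneg
        rw [abs_le]; constructor <;> nlinarith [sq_nonneg k]
      have h2 : ((n : ℝ) + 2) * (n + 1) * |c (n + 2)| ≤ ((n : ℝ) + 2) * (n + 1) * M := by
        rw [h]; exact mul_le_mul h1 ih.1 (abs_nonneg _) (by positivity)
      exact le_of_mul_le_mul_left h2 (by positivity)
  have b0 : ∀ n, |c n| ≤ M * ((n : ℝ) + 1) ^ 0 := by intro n; simpa using (hc2 n).1
  set c' : ℕ → ℝ := fun n => ((n : ℝ) + 1) * c (n + 1) with hc'
  have b1 : ∀ n, |c' n| ≤ M * ((n : ℝ) + 1) ^ 1 := by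
    intro n
    have : (0 : ℝ) ≤ (n : ℝ) + 1 := by positivity
    rw [hc', abs_mul, abs_of_nonneg this, pow_one, mul_comm]
    exact mul_le_mul_of_nonneg_right (hc2 n).2 this
  set c'' : ℕ → ℝ := fun n => ((n : ℝ) + 1) * c' (n + 1) with hc''
  have b2 : ∀ n, |c'' n| ≤ (2 * M) * ((n : ℝ) + 1) ^ 2 := by
    intro n
    have h0 : (0 : ℝ) ≤ (n : ℝ) + 1 := by positivity
    have := b1 (n + 1)
    rw [hc'', abs_mul, abs_of_nonneg h0]
    have h3 : M * (((n + 1 : ℕ) : ℝ) + 1) ^ 1 ≤ 2 * M * ((n : ℝ) + 1) := by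
      push_cast
      have : (0 : ℝ) ≤ n := n.cast_nonneg
      nlinarith [mul_nonneg hM this]
    calc _ ≤ ((n : ℝ) + 1) * (2 * M * ((n : ℝ) + 1)) :=
          mul_le_mul_of_nonneg_left (this.trans h3) h0
      _ = _ := by ring
  set F : ℝ → ℝ := fun x => ∑' n, c n * x ^ n with hF
  set F1 : ℝ → ℝ := fun x => ∑' n, c' n * x ^ n with hF1
  set F2 : ℝ → ℝ := fun x => ∑' n, c'' n * x ^ n with hF2
  have D0 : ∀ s, |s| < 1 → HasDerivAt F (F1 s) s := fun s hs => (ps_deriv c M 0 b0 s hs).2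
  have D1 : ∀ s, |s| < 1 → HasDerivAt F1 (F2 s) s := fun s hs => (ps_deriv c' M 1 b1 s hs).2
  have ode : ∀ s, |s| < 1 → (1 - s ^ 2) * F2 s - s * F1 s + k ^ 2 * F s = 0 := by
    intro s hs
    have S0 := (ps_deriv c M 0 b0 s hs).1.hasSum
    have S1 := (ps_deriv c' M 1 b1 s hs).1.hasSum
    have S2 := (ps_deriv c'' (2 * M) 2 b2 s hs).1.hasSum
    have T1 : HasSum (fun n : ℕ => (n : ℝ) * c n * s ^ n) (s * F1 s) := by
      rw [← hasSum_nat_add_iff' 1]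
      simp only [Finset.range_one, Finset.sum_singleton, Nat.cast_zero, zero_mul, sub_zero]
      refine hs_congr (S1.mul_left s) (fun n => ?_) rfl
      simp only [hc']; push_cast; ring
    have T2 : HasSum (fun n : ℕ => (n : ℝ) * ((n : ℝ) - 1) * c n * s ^ n) (s ^ 2 * F2 s) := by
      rw [← hasSum_nat_add_iff' 2]
      simp only [Finset.sum_range_succ, Finset.range_zero, Finset.sum_empty]
      refine hs_congr (S2.mul_left (s ^ 2)) (fun n => ?_) ?_
      · simp only [hc'', hc']; push_cast; ring
      · simp [hF2]
    have T := ((S2.sub T2).sub T1).add (S0.mul_left (k ^ 2))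
    have Z : HasSum (fun _ : ℕ => (0 : ℝ)) (F2 s - s ^ 2 * F2 s - s * F1 s + k ^ 2 * F s) := by
      refine hs_congr T (fun n => ?_) rfl
      have := rec n
      simp only [hc'', hc']
      push_cast
      rw [show n + 1 + 1 = n + 2 from rfl]
      linear_combination (-s ^ n) * this
    have := Z.unique hasSum_zero
    linarith
  have habs : ∀ x, 0 ≤ x → x < π / 2 → |sin x| < 1 := by
    intro x h0 h1
    have hcpos : 0 < cos x := cos_pos_of_mem_Ioo ⟨by linarith, h1⟩
    rw [← sq_lt_one_iff_abs_lt_one]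
    nlinarith [sin_sq_add_cos_sq x]
  have hF0 : F 0 = c 0 := by
    simp only [hF]
    rw [tsum_eq_single 0]; · simp
    intro n hn; simp [hn]
  have hF10 : F1 0 = c 1 := by
    simp only [hF1]
    rw [tsum_eq_single 0]; · simp [hc']
    intro n hn; simp [hn]
  have dk : ∀ x : ℝ, HasDerivAt (fun x => k * x) k x := fun x => by
    simpa using (hasDerivAt_id x).const_mul k
  have dG : ∀ x, 0 ≤ x → x < π / 2 →
      HasDerivAt (fun x => F (sin x)) (F1 (sin x) * cos x) x := fun x h0 h1 =>
    (D0 _ (habs x h0 h1)).comp x (hasDerivAt_sin x)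
  have dG1 : ∀ x, 0 ≤ x → x < π / 2 →
      HasDerivAt (fun x => F1 (sin x) * cos x) (-k ^ 2 * F (sin x)) x := fun x h0 h1 => by
    have h := ((D1 _ (habs x h0 h1)).comp x (hasDerivAt_sin x)).mul (hasDerivAt_cos x)
    refine h.congr_deriv ?_
    have := ode _ (habs x h0 h1)
    simp only [Function.comp]
    linear_combination this + F2 (sin x) * (sin_sq_add_cos_sq x)
  have dc : ∀ x, HasDerivAt (fun x => cos (k * x)) (-sin (k * x) * k) x := fun x =>
    (hasDerivAt_cos (k * x)).comp x (dk x)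
  have ds : ∀ x, HasDerivAt (fun x => sin (k * x)) (cos (k * x) * k) x := fun x =>
    (hasDerivAt_sin (k * x)).comp x (dk x)
  have d1 : ∀ x, 0 ≤ x → x < π / 2 → HasDerivAt
      (fun x => k * (F (sin x) * cos (k * x)) - (F1 (sin x) * cos x) * sin (k * x)) 0 x := by
    intro x h0 h1
    have h := (((dG x h0 h1).mul (dc x)).const_mul k).sub ((dG1 x h0 h1).mul (ds x))
    refine h.congr_deriv ?_
    ring
  have d2 : ∀ x, 0 ≤ x → x < π / 2 → HasDerivAt
      (fun x => k * (F (sin x) * sin (k * x)) + (F1 (sin x) * cos x) * cos (k * x)) 0 x := by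
    intro x h0 h1
    have h := (((dG x h0 h1).mul (ds x)).const_mul k).add ((dG1 x h0 h1).mul (dc x))
    refine h.congr_deriv ?_
    ring
  have cst : ∀ f : ℝ → ℝ, (∀ x, 0 ≤ x → x < π / 2 → HasDerivAt f 0 x) → f t = f 0 := by
    intro f hf
    refine constant_of_has_deriv_right_zero (a := 0) (b := t) ?_ ?_ t ⟨ht0, le_rfl⟩
    · intro x hx
      exact (hf x hx.1 (hx.2.trans_lt ht)).continuousAt.continuousWithinAt
    · intro x hx
      exact (hf x hx.1 (hx.2.trans ht)).hasDerivWithinAt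
  have e1 := cst _ d1
  have e2 := cst _ d2
  simp only [sin_zero, cos_zero, mul_zero, mul_one, hF0, hF10, sub_zero, zero_add] at e1 e2
  have hval : F (sin t) = c 0 * cos (k * t) + c 1 / k * sin (k * t) := by
    field_simp
    linear_combination cos (k * t) * e1 + sin (k * t) * e2
      - k * F (sin t) * (sin_sq_add_cos_sq (k * t))
  rw [← hval]
  exact (ps_deriv c M 0 b0 _ (habs t ht0 ht)).1.hasSum

lemma prod_rec (x : ℝ) (n : ℕ) :
    (∏ i ∈ Finset.range (n + 2), (x + 3 - i)) * (x + 1 - n) =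
      (x + 3) * (x + 2) * (x + 1) * ∏ i ∈ Finset.range n, (x - i) := by
  have h1 := Finset.prod_range_succ (fun i : ℕ => x + 3 - (i : ℝ)) (n + 2)
  rw [Finset.prod_range_succ', Finset.prod_range_succ', Finset.prod_range_succ'] at h1
  have h2 : ∏ i ∈ Finset.range n, (x + 3 - ((i + 1 + 1 + 1 : ℕ) : ℝ)) =
      ∏ i ∈ Finset.range n, (x - i) := by
    refine Finset.prod_congr rfl fun i _ => ?_
    push_cast; ring
  rw [h2] at h1
  push_cast at h1
  linear_combination (-1) * h1

noncomputable def fa (n : ℕ) : ℝ := gbinom (3 * (n : ℝ) / 2 + 1) n / (3 * (n : ℝ) / 2 + 1)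

lemma fa_rec (n : ℕ) : 4 * ((n : ℝ) + 1) * (n + 4) * fa (n + 2) =
    3 * (3 * n + 4) * (3 * n + 2) * fa n := by
  have h := prod_rec (3 * (n : ℝ) / 2 + 1) n
  unfold fa gbinom
  rw [show (3 * ((n + 2 : ℕ) : ℝ) / 2 + 1) = 3 * (n : ℝ) / 2 + 1 + 3 by push_cast; ring]
  rw [Nat.factorial_succ, Nat.factorial_succ]
  have hf : (n.factorial : ℝ) ≠ 0 := by positivity
  set P := ∏ i ∈ Finset.range n, (3 * (n : ℝ) / 2 + 1 - i)
  set Q := ∏ i ∈ Finset.range (n + 2), (3 * (n : ℝ) / 2 + 1 + 3 - i)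
  push_cast
  have e1 : (3 * (n : ℝ) / 2 + 1 + 3) ≠ 0 := by positivity
  have e2 : (3 * (n : ℝ) / 2 + 1) ≠ 0 := by positivity
  have e3 : (n : ℝ) + 1 ≠ 0 := by positivity
  have e4 : (n : ℝ) + 1 + 1 ≠ 0 := by positivity
  have e5 : (n : ℝ) + 4 ≠ 0 := by positivity
  have hQ : Q = (3 * (n : ℝ) / 2 + 1 + 3) * (3 * (n : ℝ) / 2 + 1 + 2) * (3 * (n : ℝ) / 2 + 1 + 1) * P
      / ((n + 4) / 2) := by
    rw [eq_div_iff (by positivity)]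
    linear_combination h
  rw [hQ]
  field_simp
  ring

noncomputable def fA (κ : ℝ) (n : ℕ) : ℝ := fa n * κ ^ n

lemma fA_rec (κ : ℝ) (hκ : κ ^ 2 = 4 / 27) (n : ℕ) :
    9 * ((n : ℝ) + 1) * (n + 4) * fA κ (n + 2) = (3 * n + 4) * (3 * n + 2) * fA κ n := by
  have := fa_rec n
  unfold fA
  rw [pow_add, hκ]
  linear_combination (κ ^ n / 3) * this

lemma fa_zero : fa 0 = 1 := by simp [fa, gbinom]
lemma fa_one : fa 1 = 1 := by simp [fa, gbinom]; norm_num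

noncomputable def fp (κ : ℝ) : ℕ → ℝ
  | 0 => 1
  | n + 1 => -κ / 4 * fA κ n * (n + 2) / (n + 1)

noncomputable def fq (κ : ℝ) : ℕ → ℝ
  | 0 => 1 / 3
  | 1 => -κ
  | n + 2 => -1 / 27 * fA κ n * (3 * n + 2) / (n + 1)

lemma fp_rec (κ : ℝ) (hκ : κ ^ 2 = 4 / 27) (n : ℕ) :
    ((n : ℝ) + 2) * (n + 1) * fp κ (n + 2) = ((n : ℝ) ^ 2 - (1 / 3) ^ 2) * fp κ n := by
  rcases n with _ | n
  · simp [fp, fA, fa_one]; linear_combination (-3 / 4) * hκ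
  · have h := fA_rec κ hκ n
    simp only [fp]
    push_cast
    have e3 : (n : ℝ) + 1 ≠ 0 := by positivity
    have e5 : (n : ℝ) + 4 ≠ 0 := by positivity
    have hA : fA κ (n + 2) = (3 * n + 4) * (3 * n + 2) * fA κ n / (9 * ((n : ℝ) + 1) * (n + 4)) := by
      rw [eq_div_iff (by positivity)]; linear_combination h
    rw [hA]
    field_simp
    ring

lemma fq_rec (κ : ℝ) (hκ : κ ^ 2 = 4 / 27) (n : ℕ) :
    ((n : ℝ) + 2) * (n + 1) * fq κ (n + 2) = ((n : ℝ) ^ 2 - (2 / 3) ^ 2) * fq κ n := by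
  rcases n with _ | _ | n
  · simp [fq, fA, fa_zero]; norm_num
  · simp [fq, fA, fa_one]; ring
  · have h := fA_rec κ hκ n
    simp only [fq]
    push_cast
    have e3 : (n : ℝ) + 1 ≠ 0 := by positivity
    have e5 : (n : ℝ) + 4 ≠ 0 := by positivity
    have hA : fA κ (n + 2) = (3 * n + 4) * (3 * n + 2) * fA κ n / (9 * ((n : ℝ) + 1) * (n + 4)) := by
      rw [eq_div_iff (by positivity)]; linear_combination h
    rw [hA]
    field_simp
    ring

theorem fuss_genfun_p_three_halves (z : ℝ) (hz0 : 0 ≤ z)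
    (hz : z < 2 / (3 * Real.sqrt 3)) :
    ∀ β : ℝ, β = Real.arcsin (3 * Real.sqrt 3 * z / 2) / 3 →
      HasSum (fun n : ℕ => gbinom (3 * (n : ℝ) / 2 + 1) n * z ^ n / (3 * (n : ℝ) / 2 + 1))
        (3 / (Real.sqrt 3 * Real.cos β - Real.sin β) ^ 2) := by
  intro β hβ
  have hfun : (fun n : ℕ => gbinom (3 * (n : ℝ) / 2 + 1) n * z ^ n / (3 * (n : ℝ) / 2 + 1))
      = fun n => fa n * z ^ n := by
    funext n; unfold fa; ring
  rw [hfun]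
  rcases hz0.eq_or_lt with h0 | hzpos
  · subst h0
    have : β = 0 := by rw [hβ]; simp
    subst this
    have h := hasSum_single (f := fun n => fa n * (0 : ℝ) ^ n) 0 (by intro n hn; simp [hn])
    refine hs_congr h (fun _ => rfl) ?_
    simp [fa_zero]
  set w := Real.sqrt 3 with hw
  have hwpos : 0 < w := by positivity
  have hw2 : w ^ 2 = 3 := Real.sq_sqrt (by norm_num)
  set κ := 2 * w / 9 with hκdef
  have hκ : κ ^ 2 = 4 / 27 := by rw [hκdef]; linear_combination (4 / 81) * hw2
  set s := 3 * w * z / 2 with hs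
  have hκs : κ * s = z := by rw [hκdef, hs]; linear_combination (z / 3) * hw2
  have hs0 : 0 < s := by positivity
  have hs1 : s < 1 := by
    rw [lt_div_iff₀ (by positivity)] at hz
    rw [hs]; linarith
  have hst : sin (arcsin s) = s := sin_arcsin (by linarith) hs1.le
  have ht : arcsin s = 3 * β := by rw [hβ]; ring
  have ht0 : 0 ≤ arcsin s := arcsin_nonneg.2 hs0.le
  have ht1 : arcsin s < π / 2 := arcsin_lt_pi_div_two.2 hs1
  have hU := ps_trig (fp κ) (1 / 3) (by norm_num) (by norm_num) (fp_rec κ hκ) _ ht0 ht1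
  have hV := ps_trig (fq κ) (2 / 3) (by norm_num) (by norm_num) (fq_rec κ hκ) _ ht0 ht1
  rw [hst, ht, show 1 / 3 * (3 * β) = β by ring] at hU
  rw [hst, ht, show 2 / 3 * (3 * β) = 2 * β by ring] at hV
  rw [← hasSum_nat_add_iff' 1] at hU
  rw [← hasSum_nat_add_iff' 2] at hV
  have hT := ((hV.neg).sub (hU.mul_left z)).mul_left (1 / z ^ 2)
  have hzz : z = s * κ := by rw [← hκs]; ring
  have hpz : ∀ n : ℕ, z ^ n = s ^ n * κ ^ n := fun n => by rw [hzz, mul_pow]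
  refine hs_congr hT (fun n => ?_) ?_
  · simp only [fp, fq, fA]
    have e3 : (n : ℝ) + 1 ≠ 0 := by positivity
    rw [hpz n]
    have hz2 : s ^ 2 = z ^ 2 * (27 / 4) := by rw [hzz]; linear_combination (-27 / 4 * s ^ 2) * hκ
    have hz3 : z * κ * s = z ^ 2 := by linear_combination z * hκs
    have : ∀ X : ℝ, z ^ 2 * (fa n * (s ^ n * κ ^ n)) = X → fa n * (s ^ n * κ ^ n) = 1 / z ^ 2 * X := by
      intro X hX; rw [← hX]; field_simp
    apply this
    rw [pow_add s n 2, pow_add s n 1, hz2, pow_one]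
    have E1 : -1 / 27 * (fa n * κ ^ n) * (3 * n + 2) / (n + 1) =
        -1 / 27 * (fa n * κ ^ n) * (3 - 1 / ((n : ℝ) + 1)) := by
      generalize fa n * κ ^ n = T
      field_simp; ring
    have E2 : -κ / 4 * (fa n * κ ^ n) * (n + 2) / (n + 1) =
        -κ / 4 * (fa n * κ ^ n) * (1 + 1 / ((n : ℝ) + 1)) := by
      generalize fa n * κ ^ n = T
      field_simp; ring
    rw [E1, E2]
    linear_combination (-(1 + 1 / ((n : ℝ) + 1)) / 4 * fa n * s ^ n * κ ^ n) * hz3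
  · have hs3 : s = 3 * sin β - 4 * sin β ^ 3 := by rw [← sin_three_mul, ← ht, hst]
    have hcs := sin_sq_add_cos_sq β
    simp only [Finset.sum_range_succ, Finset.range_zero, Finset.sum_empty, fp, fq, fA, fa_zero]
    rw [cos_two_mul, sin_two_mul]
    set C := cos β
    set S := sin β
    set u := C - w / 3 * S with hu
    have hwu : w * C - S = w * u := by rw [hu]; linear_combination (S / 3) * hw2
    have hzu : z = u - u ^ 3 := by
      rw [hzz, hs3, hκdef, hu]
      linear_combination (C * S ^ 2 / 3 - w * S ^ 3 / 27) * hw2 + (C - w * S) * hcs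
    have hu0 : u ≠ 0 := by
      intro h; rw [h] at hzu; norm_num at hzu; linarith
    rw [hwu, mul_pow, hw2]
    have hVu : 1 / 3 * (2 * C ^ 2 - 1) + -κ / (2 / 3) * (2 * S * C) = u ^ 2 - 2 / 3 := by
      rw [hκdef, hu]
      linear_combination (-S ^ 2 / 9) * hw2 - (1 / 3) * hcs
    have hUu : 1 * C + (-κ / 4 * 1 * 2) * 3 * S = u := by
      rw [hκdef, hu]; ring
    have goal' : 1 - u ^ 2 - z * u = z ^ 2 / u ^ 2 := by
      rw [hzu]; field_simp
    have : ∀ X : ℝ, z ^ 2 / u ^ 2 = X → 3 / (3 * u ^ 2) = 1 / z ^ 2 * X := by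
      intro X hX; rw [← hX]; field_simp
    apply this
    rw [← goal']
    push_cast
    linear_combination hVu + z * hUu + hκs
end

section
/- For every real number r and every real z with 0 ≤ z < 2/(3√3), the series ∑_{n≥0} C(3n/2 + r, n) z^n converges and equals (3/(√3 cos β − sin β)²)^r · 1/(cos β · (cos β − √3 sin β)), where β = (1/3)·arcsin(3√3 z/2). (For such z one has 0 ≤ β < π/6, so the relevant bases are positive.) -/
open Real

open Finset in
lemma gb_choose (a : ℝ) (n : ℕ) : gbinom a n = Ring.choose a n := by
  have h : ∀ n : ℕ, (descPochhammer ℤ n).smeval a = ∏ i ∈ Finset.range n, (a - i) := by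
    intro n
    induction n with
    | zero => simp
    | succ n ih =>
      rw [Finset.prod_range_succ, ← ih]
      simp [descPochhammer_succ_right, Polynomial.smeval_mul, Polynomial.smeval_natCast]
  rw [Ring.choose_eq_smul, h, gbinom, smul_eq_mul]
  ring

lemma gb_hasSum (a u : ℝ) (hu : |u| < 1) :
    HasSum (fun k : ℕ => gbinom a k * u ^ k) ((1 + u) ^ a) := by
  have h := (Real.one_add_rpow_hasFPowerSeriesOnBall_zero (a := a)).hasSum (y := u) (by
    rw [← ENNReal.ofReal_one, Metric.eball_ofReal]; simpa using hu)
  simp only [zero_add] at h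
  have e : (fun k : ℕ => gbinom a k * u ^ k) = fun n => (binomialSeries ℝ a n) fun _ => u := by
    funext k
    rw [gb_choose, binomialSeries_apply]
    simp
  rw [e]
  exact h

lemma gb_diff (r : ℝ) (N : ℕ) :
    ∑ n ∈ Finset.range (N + 1), ((-1 : ℝ) ^ (N - n) * N.choose n) *
      ∏ j ∈ Finset.range N, ((n : ℝ) / 2 + r + 1 + j) = N.factorial * (1 / 2) ^ N := by
  classical
  let P : Polynomial ℝ := ∏ j ∈ Finset.range N,
    (Polynomial.C (1 / 2 : ℝ) * Polynomial.X + Polynomial.C (r + 1 + j))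
  have hd1 : ∀ j ∈ Finset.range N,
      (Polynomial.C (1 / 2 : ℝ) * Polynomial.X + Polynomial.C (r + 1 + j)).natDegree ≤ 1 :=
    fun j _ => Polynomial.natDegree_linear_le
  have hdeg : P.natDegree ≤ N := by
    refine (Polynomial.natDegree_prod_le _ _).trans ?_
    refine (Finset.sum_le_sum hd1).trans ?_
    simp
  have hcoeff : P.coeff N = (1 / 2) ^ N := by
    have := Polynomial.coeff_prod_of_natDegree_le (s := Finset.range N) _ 1 hd1
    rw [Finset.card_range, mul_one] at this
    rw [this, Finset.prod_congr rfl (g := fun _ => (1 / 2 : ℝ)), Finset.prod_const, Finset.card_range]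
    intro j _
    rw [Polynomial.coeff_add, Polynomial.coeff_C_mul, Polynomial.coeff_X_one, Polynomial.coeff_C]
    simp
  have heval : ∀ x : ℝ, ∏ j ∈ Finset.range N, (x / 2 + r + 1 + j) = P.eval x := by
    intro x
    simp only [P, Polynomial.eval_prod]
    refine Finset.prod_congr rfl fun j _ => ?_
    simp
    ring
  have hf : (fun x : ℝ => ∏ j ∈ Finset.range N, (x / 2 + r + 1 + j)) =
      (fun x : ℝ => ∑ k ∈ Finset.range N, P.coeff k * x ^ k) +
        ((1 / 2 : ℝ) ^ N) • (fun x : ℝ => x ^ N) := by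
    funext x
    rw [heval, Polynomial.eval_eq_sum_range' (Nat.lt_succ_of_le hdeg), Finset.sum_range_succ, hcoeff]
    simp
  have h1 := fwdDiff_iter_eq_sum_shift (1 : ℝ)
    (fun x : ℝ => ∏ j ∈ Finset.range N, (x / 2 + r + 1 + j)) N 0
  have h2 : (fwdDiff (1:ℝ))^[N] (fun x : ℝ => ∏ j ∈ Finset.range N, (x / 2 + r + 1 + j)) 0
      = N.factorial * (1 / 2) ^ N := by
    rw [hf, fwdDiff_iter_add, fwdDiff_iter_const_smul, fwdDiff_iter_sum_mul_pow_eq_zero,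
      fwdDiff_iter_eq_factorial]
    simp
    ring
  rw [← h2, h1]
  refine Finset.sum_congr rfl fun n _ => ?_
  simp

lemma gb_term (r : ℝ) (n k : ℕ) :
    gbinom (3 * (n : ℝ) / 2 + r) n * gbinom (-(3 * (n : ℝ) / 2 + r) - 1) k =
      ((-1 : ℝ) ^ k * (n + k).choose n) *
      (∏ j ∈ Finset.range (n + k), ((n : ℝ) / 2 + r + 1 + j)) / (n + k).factorial := by
  have h1 : ∏ i ∈ Finset.range n, (3 * (n : ℝ) / 2 + r - i) =
      ∏ j ∈ Finset.range n, ((n : ℝ) / 2 + r + 1 + j) := by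
    rw [← Finset.prod_range_reflect]
    refine Finset.prod_congr rfl fun j hj => ?_
    have : j + 1 ≤ n := Finset.mem_range.1 hj
    rw [Nat.sub_sub, Nat.cast_sub (by omega)]
    push_cast
    ring
  have h2 : ∏ i ∈ Finset.range k, (-(3 * (n : ℝ) / 2 + r) - 1 - i) =
      (-1) ^ k * ∏ j ∈ Finset.range k, ((n : ℝ) / 2 + r + 1 + (n + j : ℕ)) := by
    rw [← Finset.card_range k, ← Finset.prod_const, Finset.card_range, ← Finset.prod_mul_distrib]
    refine Finset.prod_congr rfl fun j hj => ?_
    push_cast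
    ring
  rw [gbinom, gbinom, h1, h2, Finset.prod_range_add, Nat.cast_add_choose]
  have := Nat.factorial_ne_zero n
  have := Nat.factorial_ne_zero k
  have := Nat.factorial_ne_zero (n + k)
  field_simp

lemma gb_conv (r : ℝ) (N : ℕ) :
    ∑ p ∈ Finset.HasAntidiagonal.antidiagonal N, gbinom (3 * (p.1 : ℝ) / 2 + r) p.1 *
      gbinom (-(3 * (p.1 : ℝ) / 2 + r) - 1) p.2 = (1 / 2) ^ N := by
  have hN : (N.factorial : ℝ) ≠ 0 := by exact_mod_cast Nat.factorial_ne_zero N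
  have := gb_diff r N
  rw [Finset.Nat.sum_antidiagonal_eq_sum_range_succ_mk]
  rw [eq_comm, ← mul_right_inj' hN, ← this, Finset.mul_sum]
  refine Finset.sum_congr rfl fun n hn => ?_
  have : n ≤ N := Nat.lt_succ_iff.1 (Finset.mem_range.1 hn)
  simp only [gb_term, Nat.add_sub_cancel' this]
  field_simp

lemma gb_abs_le (b : ℝ) (m k : ℕ) (h : |b| ≤ m + 1) :
    |gbinom b k| ≤ (k + m).choose m := by
  have : ((k + m).choose m : ℝ) = (∏ i ∈ Finset.range k, ((m : ℝ) + 1 + i)) / k.factorial := by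
    have h1 : ∏ i ∈ Finset.range k, ((m : ℝ) + 1 + i) = ((m + 1).ascFactorial k : ℕ) := by
      rw [Nat.ascFactorial_eq_prod_range]; push_cast; rfl
    rw [h1, Nat.ascFactorial_eq_factorial_mul_choose, add_comm k m, Nat.choose_symm_add]
    have := Nat.factorial_ne_zero k
    push_cast
    field_simp
  rw [this, gbinom, abs_div, Finset.abs_prod, Nat.abs_cast]
  gcongr with i _
  calc |b - i| ≤ |b| + |(i:ℝ)| := abs_sub _ _
    _ ≤ _ := by rw [Nat.abs_cast]; linarith

lemma gb_bound (r : ℝ) : ∃ K : ℝ, 0 < K ∧ ∀ n : ℕ,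
    |gbinom (3 * (n : ℝ) / 2 + r) n| * (2 / (3 * Real.sqrt 3)) ^ n ≤ K := by
  set c : ℕ → ℝ := fun n => |gbinom (3 * (n : ℝ) / 2 + r) n| * (2 / (3 * Real.sqrt 3)) ^ n with hc
  have hc0 : ∀ n, 0 ≤ c n := fun n => by positivity
  obtain ⟨n0, hn0⟩ := exists_nat_ge (2 * |r|)
  have h3 : (3 : ℝ) ^ (3 / 2 : ℝ) = 3 * Real.sqrt 3 := by
    rw [show (3 / 2 : ℝ) = 1 + 1 / 2 by norm_num, Real.rpow_add (by norm_num), Real.rpow_one,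
      ← Real.sqrt_eq_rpow]
  have key : ∀ n, n0 ≤ n → c n ≤ 3 ^ (r + 1) := by
    intro n hn
    have hn' : 2 * |r| ≤ n := hn0.trans (by exact_mod_cast hn)
    have hr := neg_abs_le r
    set a : ℝ := 3 * (n : ℝ) / 2 + r with ha
    have han : (n : ℝ) ≤ a := by rw [ha]; linarith
    have ha0 : 0 ≤ a := le_trans (Nat.cast_nonneg n) han
    have hterm : ∀ i ∈ Finset.range n, 0 ≤ a - i := by
      intro i hi
      have : (i : ℝ) ≤ n := by exact_mod_cast (Finset.mem_range.1 hi).le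
      linarith
    have hg0 : 0 ≤ gbinom a n := div_nonneg (Finset.prod_nonneg hterm) (Nat.cast_nonneg _)
    have hm1 : a ≤ ⌈a⌉₊ := Nat.le_ceil a
    have hm2 : (⌈a⌉₊ : ℝ) < a + 1 := Nat.ceil_lt_add_one ha0
    set m := ⌈a⌉₊
    have h1 : gbinom a n ≤ (m.choose n : ℝ) := by
      rw [← Ring.choose_natCast (R := ℝ), ← gb_choose]
      unfold gbinom
      gcongr with i hi
      exact hterm
    have hnm : n ≤ m := by exact_mod_cast han.trans hm1
    have h2 : (2 : ℝ) ^ n * m.choose n ≤ 3 ^ m := by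
      have e : (3 : ℝ) ^ m = ∑ i ∈ Finset.range (m + 1), (2 : ℝ) ^ i * m.choose i := by
        rw [show (3 : ℝ) = 2 + 1 by norm_num, add_pow]
        simp
      rw [e]
      exact Finset.single_le_sum (f := fun i => (2 : ℝ) ^ i * m.choose i)
        (fun i _ => by positivity) (Finset.mem_range.2 (Nat.lt_succ_of_le hnm))
    have h4 : (3 : ℝ) ^ m ≤ 3 ^ (r + 1) * (3 * Real.sqrt 3) ^ n := by
      rw [← h3, ← Real.rpow_natCast, ← Real.rpow_natCast, ← Real.rpow_mul (by norm_num),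
        ← Real.rpow_add (by norm_num)]
      apply Real.rpow_le_rpow_of_exponent_le (by norm_num)
      rw [ha] at hm2
      linarith
    have hpos : 0 < (3 * Real.sqrt 3) ^ n := by positivity
    simp only [hc]
    rw [abs_of_nonneg hg0, div_pow, ← mul_div_assoc, div_le_iff₀ hpos]
    calc gbinom a n * 2 ^ n ≤ m.choose n * 2 ^ n := by gcongr
      _ = 2 ^ n * m.choose n := mul_comm _ _
      _ ≤ _ := h2.trans h4
  have hS : 0 ≤ ∑ n ∈ Finset.range n0, c n := Finset.sum_nonneg fun n _ => hc0 n
  have h3p : (0 : ℝ) < 3 ^ (r + 1) := by positivity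
  refine ⟨3 ^ (r + 1) + ∑ n ∈ Finset.range n0, c n, by positivity, fun n => ?_⟩
  change c n ≤ _
  rcases le_or_gt n0 n with h | h
  · linarith [key n h]
  · have := Finset.single_le_sum (f := c) (fun i _ => hc0 i) (Finset.mem_range.2 h)
    linarith

lemma gb_small (r : ℝ) : ∃ ε : ℝ, 0 < ε ∧ ε < 1 / 4 ∧ ∀ u : ℝ, |u| < ε →
    HasSum (fun n : ℕ => gbinom (3 * (n : ℝ) / 2 + r) n * u ^ n *
      (1 + u) ^ (-(3 * (n : ℝ) / 2 + r) - 1)) (1 / (1 - u / 2)) := by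
  obtain ⟨K, hK, hb⟩ := gb_bound r
  have hs1 : 1 ≤ Real.sqrt 3 := Real.one_le_sqrt.2 (by norm_num)
  have hρ0 : 0 < 2 / (3 * Real.sqrt 3) := by positivity
  have hρ1 : 2 / (3 * Real.sqrt 3) < 1 := by
    rw [div_lt_one (by positivity)]; linarith
  set ρ := 2 / (3 * Real.sqrt 3)
  refine ⟨ρ / 4, by positivity, by linarith, fun u hu => ?_⟩
  have hu4 : |u| < 1 / 4 := by linarith
  obtain ⟨R, hR⟩ := exists_nat_ge |r|
  set F : ℕ × ℕ → ℝ := fun p => gbinom (3 * (p.1 : ℝ) / 2 + r) p.1 * u ^ p.1 *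
      (gbinom (-(3 * (p.1 : ℝ) / 2 + r) - 1) p.2 * u ^ p.2) with hF
  set G : ℕ × ℕ → ℝ := fun p => K * (|u| / ρ) ^ p.1 *
      ((p.2 + (2 * p.1 + R)).choose (2 * p.1 + R) * |u| ^ p.2) with hG
  have hG0 : 0 ≤ G := fun p => by simp only [hG]; positivity
  have hFG : ∀ p, ‖F p‖ ≤ G p := by
    rintro ⟨n, k⟩
    simp only [hF, hG, Real.norm_eq_abs, abs_mul, abs_pow]
    have e1 : |gbinom (3 * (n : ℝ) / 2 + r) n| * |u| ^ n ≤ K * (|u| / ρ) ^ n := by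
      have := hb n
      rw [div_pow, ← mul_div_assoc, le_div_iff₀ (by positivity)]
      calc _ = (|gbinom (3 * (n : ℝ) / 2 + r) n| * ρ ^ n) * |u| ^ n := by ring
        _ ≤ _ := by gcongr
    have e2 : |gbinom (-(3 * (n : ℝ) / 2 + r) - 1) k| ≤ (k + (2 * n + R)).choose (2 * n + R) := by
      apply gb_abs_le
      have := abs_le.1 (le_refl |r|)
      have hn : (0 : ℝ) ≤ n := Nat.cast_nonneg n
      push_cast
      rw [abs_le]
      constructor <;> linarith
    gcongr
  have hu1 : ‖|u|‖ < 1 := by rw [Real.norm_eq_abs, abs_abs]; linarith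
  have hGs : Summable G := by
    rw [summable_prod_of_nonneg hG0]
    constructor
    · intro n
      have := (summable_choose_mul_geometric_of_norm_lt_one (2 * n + R) hu1).mul_left
        (K * (|u| / ρ) ^ n)
      exact this
    · have e : ∀ n, ∑' k, G (n, k) = K / (1 - |u|) ^ (R + 1) * (|u| / ρ / (1 - |u|) ^ 2) ^ n := by
        intro n
        have h1 : 1 - |u| ≠ 0 := by linarith
        simp only [hG]
        rw [tsum_mul_left, tsum_choose_mul_geometric_of_norm_lt_one (2 * n + R) hu1, add_assoc,
          pow_add, pow_mul, div_pow _ ((1 - |u|) ^ 2) n]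
        field_simp
      simp only [e]
      apply Summable.mul_left
      apply summable_geometric_of_lt_one
      · positivity
      · have h2 : |u| / ρ < 1 / 4 := by rw [div_lt_iff₀ hρ0]; linarith
        have h3 : (1 / 2 : ℝ) < (1 - |u|) ^ 2 := by nlinarith
        rw [div_lt_one (by linarith)]
        linarith
  have hFs : Summable F := Summable.of_norm_bounded hGs hFG
  obtain ⟨S, hS⟩ := hFs
  have hrow : HasSum (fun n : ℕ => gbinom (3 * (n : ℝ) / 2 + r) n * u ^ n *
      (1 + u) ^ (-(3 * (n : ℝ) / 2 + r) - 1)) S := by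
    apply hS.prod_fiberwise
    intro n
    exact (gb_hasSum _ u (by linarith)).mul_left _
  have hdiag : HasSum (fun N : ℕ => (u / 2) ^ N) S := by
    have h1 := (Finset.HasAntidiagonal.sigmaAntidiagonalEquivProd (A := ℕ)).hasSum_iff.2 hS
    have h2 := h1.sigma (g := fun N : ℕ => (u / 2) ^ N) (fun N => by
      have h := hasSum_fintype (fun c : Finset.HasAntidiagonal.antidiagonal N => F c)
      suffices e : (u / 2) ^ N = ∑ c : Finset.HasAntidiagonal.antidiagonal N, F c by
        rw [e]
        exact h
      rw [Finset.sum_coe_sort (Finset.HasAntidiagonal.antidiagonal N) F, div_pow,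
        show u ^ N / 2 ^ N = u ^ N * (1 / 2) ^ N by rw [one_div, inv_pow, div_eq_mul_inv], ← gb_conv r N, Finset.mul_sum]
      refine Finset.sum_congr rfl fun p hp => ?_
      have := Finset.HasAntidiagonal.mem_antidiagonal.1 hp
      simp only [hF, ← this, pow_add]
      ring)
    exact h2
  have hgeo := hasSum_geometric_of_abs_lt_one (r := u / 2) (by
    rw [abs_div, abs_of_pos (by norm_num : (0:ℝ) < 2)]; linarith)
  rw [one_div, hgeo.unique hdiag]
  exact hrow

lemma gb_geom (z β : ℝ) (h1 : -(2 / (3 * Real.sqrt 3)) < z) (h2 : z < 2 / (3 * Real.sqrt 3))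
    (hβ : β = Real.arcsin (3 * Real.sqrt 3 * z / 2) / 3) :
    0 < Real.cos β ∧ 0 < Real.sqrt 3 * Real.cos β - Real.sin β ∧
    0 < Real.cos β - Real.sqrt 3 * Real.sin β ∧
    3 * (Real.sqrt 3 * Real.cos β - Real.sin β) - (Real.sqrt 3 * Real.cos β - Real.sin β) ^ 3 =
      3 * Real.sqrt 3 * z := by
  have hs : 0 < Real.sqrt 3 := by positivity
  have hsq : Real.sqrt 3 ^ 2 = 3 := Real.sq_sqrt (by norm_num)
  have a1 : -1 < 3 * Real.sqrt 3 * z / 2 := by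
    rw [← neg_div, div_lt_iff₀ (by positivity)] at h1
    linarith
  have a2 : 3 * Real.sqrt 3 * z / 2 < 1 := by
    rw [lt_div_iff₀ (by positivity)] at h2
    linarith
  have hpi := Real.pi_pos
  have b1 : -(Real.pi / 2) < Real.arcsin (3 * Real.sqrt 3 * z / 2) :=
    Real.neg_pi_div_two_lt_arcsin.2 a1
  have b2 : Real.arcsin (3 * Real.sqrt 3 * z / 2) < Real.pi / 2 :=
    Real.arcsin_lt_pi_div_two.2 a2
  have c1 : -(Real.pi / 6) < β := by linarith
  have c2 : β < Real.pi / 6 := by linarith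
  have hsin : Real.sin (3 * β) = 3 * Real.sqrt 3 * z / 2 := by
    rw [hβ, mul_div_cancel₀ _ (by norm_num : (3:ℝ) ≠ 0), Real.sin_arcsin a1.le a2.le]
  refine ⟨Real.cos_pos_of_mem_Ioo ⟨by linarith, by linarith⟩, ?_, ?_, ?_⟩
  · have := Real.cos_pos_of_mem_Ioo (x := β + Real.pi / 6) ⟨by linarith, by linarith⟩
    rw [Real.cos_add, Real.cos_pi_div_six, Real.sin_pi_div_six] at this
    linarith
  · have := Real.cos_pos_of_mem_Ioo (x := β + Real.pi / 3) ⟨by linarith, by linarith⟩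
    rw [Real.cos_add, Real.cos_pi_div_three, Real.sin_pi_div_three] at this
    linarith
  · rw [Real.sin_three_mul] at hsin
    have hcs := Real.sin_sq_add_cos_sq β
    have hc2 : Real.cos β ^ 2 = 1 - Real.sin β ^ 2 := by linarith
    have hc3 : Real.cos β ^ 3 = Real.cos β * (1 - Real.sin β ^ 2) := by rw [← hc2]; ring
    have hs3 : Real.sqrt 3 ^ 3 = 3 * Real.sqrt 3 := by rw [pow_succ, hsq]
    have : (Real.sqrt 3 * Real.cos β - Real.sin β) ^ 3 =
      Real.sqrt 3 ^ 3 * Real.cos β ^ 3 - 3 * Real.sqrt 3 ^ 2 * Real.cos β ^ 2 * Real.sin β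
        + 3 * Real.sqrt 3 * Real.cos β * Real.sin β ^ 2 - Real.sin β ^ 3 := by ring
    rw [this, hc3, hc2, hs3, hsq]
    linarith

lemma gb_local (r : ℝ) : ∃ ε : ℝ, 0 < ε ∧ ∀ z β : ℝ, -(2 / (3 * Real.sqrt 3)) < z →
    z < 2 / (3 * Real.sqrt 3) → β = Real.arcsin (3 * Real.sqrt 3 * z / 2) / 3 →
    |3 / (Real.sqrt 3 * Real.cos β - Real.sin β) ^ 2 - 1| < ε →
      HasSum (fun n : ℕ => gbinom (3 * (n : ℝ) / 2 + r) n * z ^ n)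
        ((3 / (Real.sqrt 3 * Real.cos β - Real.sin β) ^ 2) ^ r
          * (1 / (Real.cos β * (Real.cos β - Real.sqrt 3 * Real.sin β)))) := by
  obtain ⟨ε, hε, -, hsum⟩ := gb_small r
  refine ⟨ε, hε, fun z β h1 h2 hβ hu => ?_⟩
  obtain ⟨hc, hD, hE, hcub⟩ := gb_geom z β h1 h2 hβ
  have hs : 0 < Real.sqrt 3 := by positivity
  have hsq : Real.sqrt 3 ^ 2 = 3 := Real.sq_sqrt (by norm_num)
  have hD2 : (Real.sqrt 3 * Real.cos β - Real.sin β) ^ 2 - 1 =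
      2 * (Real.cos β * (Real.cos β - Real.sqrt 3 * Real.sin β)) := by
    have hcs := Real.sin_sq_add_cos_sq β
    have : Real.sin β ^ 2 = 1 - Real.cos β ^ 2 := by linarith
    have e : (Real.sqrt 3 * Real.cos β - Real.sin β) ^ 2 = Real.sqrt 3 ^ 2 * Real.cos β ^ 2
      - 2 * Real.sqrt 3 * Real.cos β * Real.sin β + Real.sin β ^ 2 := by ring
    rw [e, hsq, this]
    ring
  have hE' : 0 < Real.cos β * (Real.cos β - Real.sqrt 3 * Real.sin β) := mul_pos hc hE
  set E := Real.cos β * (Real.cos β - Real.sqrt 3 * Real.sin β)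
  set D := Real.sqrt 3 * Real.cos β - Real.sin β
  have h := hsum _ hu
  have hBpos : 0 < 3 / D ^ 2 := by positivity
  have hx : (3 / D ^ 2) = (Real.sqrt 3 / D) ^ 2 := by rw [div_pow, hsq]
  have hxp : 0 < Real.sqrt 3 / D := by positivity
  have hz : (3 / D ^ 2 - 1) * (3 / D ^ 2) ^ (-(3 / 2) : ℝ) = z := by
    rw [Real.rpow_neg hBpos.le, hx, ← Real.rpow_natCast, ← Real.rpow_mul hxp.le,
      show (((2 : ℕ) : ℝ) * (3 / 2)) = ((3 : ℕ) : ℝ) by norm_num, Real.rpow_natCast,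
      Real.rpow_natCast, ← hx, ← div_eq_mul_inv, div_eq_iff (by positivity), div_pow,
      show Real.sqrt 3 ^ 3 = 3 * Real.sqrt 3 by rw [pow_succ, hsq]]
    field_simp
    linarith
  have h' := h.mul_left ((3 / D ^ 2) ^ (r + 1))
  have e1 : (3 / D ^ 2) ^ (r + 1) * (1 / (1 - (3 / D ^ 2 - 1) / 2)) =
      (3 / D ^ 2) ^ r * (1 / E) := by
    rw [Real.rpow_add hBpos, Real.rpow_one, mul_assoc]
    congr 1
    have hDE : D ^ 2 = 1 + 2 * E := by linarith
    rw [hDE]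
    have : 1 + 2 * E ≠ 0 := by positivity
    have e : 1 - (3 / (1 + 2 * E) - 1) / 2 = 3 * E / (1 + 2 * E) := by
      field_simp
      ring
    rw [e]
    field_simp
  rw [e1] at h'
  refine (funext fun n => ?_ : (fun n : ℕ => gbinom (3 * (n : ℝ) / 2 + r) n * z ^ n) = _) ▸ h'
  rw [show 1 + (3 / D ^ 2 - 1) = 3 / D ^ 2 by ring]
  nth_rewrite 1 [← hz]
  rw [mul_pow, ← Real.rpow_natCast ((3 / D ^ 2) ^ (-(3 / 2) : ℝ)), ← Real.rpow_mul hBpos.le]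
  rw [show -(3 / 2 : ℝ) * n = (r + 1) + (-(3 * (n : ℝ) / 2 + r) - 1) by ring,
    Real.rpow_add hBpos]
  ring

theorem binom_genfun_p_three_halves (r z : ℝ) (hz0 : 0 ≤ z)
    (hz : z < 2 / (3 * Real.sqrt 3)) :
    ∀ β : ℝ, β = Real.arcsin (3 * Real.sqrt 3 * z / 2) / 3 →
      HasSum (fun n : ℕ => gbinom (3 * (n : ℝ) / 2 + r) n * z ^ n)
        ((3 / (Real.sqrt 3 * Real.cos β - Real.sin β) ^ 2) ^ r
          * (1 / (Real.cos β * (Real.cos β - Real.sqrt 3 * Real.sin β)))) := by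
  intro β hβ
  obtain ⟨ε, hε, hloc⟩ := gb_local r
  obtain ⟨K, hK, hb⟩ := gb_bound r
  have hs : 0 < Real.sqrt 3 := by positivity
  have hsq : Real.sqrt 3 ^ 2 = 3 := Real.sq_sqrt (by norm_num)
  have hρ0 : 0 < 2 / (3 * Real.sqrt 3) := by positivity
  set c : ℕ → ℝ := fun n => gbinom (3 * (n : ℝ) / 2 + r) n with hc
  set p : FormalMultilinearSeries ℝ ℝ ℝ := FormalMultilinearSeries.ofScalars ℝ c with hp
  have hrad : ENNReal.ofReal (2 / (3 * Real.sqrt 3)) ≤ p.radius := by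
    apply p.le_radius_of_bound K
    intro n
    rw [hp, FormalMultilinearSeries.ofScalars_norm, Real.norm_eq_abs, Real.coe_toNNReal _ hρ0.le]
    exact hb n
  have hρe : 0 < ENNReal.ofReal (2 / (3 * Real.sqrt 3)) := ENNReal.ofReal_pos.2 hρ0
  have hps := (p.hasFPowerSeriesOnBall (hρe.trans_le hrad)).mono hρe hrad
  have hball : Metric.eball (0 : ℝ) (ENNReal.ofReal (2 / (3 * Real.sqrt 3))) =
      Set.Ioo (-(2 / (3 * Real.sqrt 3))) (2 / (3 * Real.sqrt 3)) := by
    rw [Metric.eball_ofReal, Real.ball_eq_Ioo]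
    simp
  have hsum : ∀ y ∈ Set.Ioo (-(2 / (3 * Real.sqrt 3))) (2 / (3 * Real.sqrt 3)),
      HasSum (fun n : ℕ => gbinom (3 * (n : ℝ) / 2 + r) n * y ^ n) (p.sum y) := by
    intro y hy
    have h := hps.hasSum (y := y) (by rw [hball]; exact hy)
    rw [zero_add] at h
    have e : (fun n : ℕ => gbinom (3 * (n : ℝ) / 2 + r) n * y ^ n) =
        fun n => p n fun _ => y := by
      funext n
      simp [hp, hc, FormalMultilinearSeries.ofScalars]
    rw [e]
    exact h
  have hfan : AnalyticOnNhd ℝ p.sum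
      (Set.Ioo (-(2 / (3 * Real.sqrt 3))) (2 / (3 * Real.sqrt 3))) := by
    rw [← hball]; exact hps.analyticOnNhd
  set b : ℝ → ℝ := fun y => Real.arcsin (3 * Real.sqrt 3 * y / 2) / 3 with hbdef
  set g : ℝ → ℝ := fun y => Real.exp (Real.log (3 / (Real.sqrt 3 * Real.cos (b y) - Real.sin (b y)) ^ 2) * r)
          * (1 / (Real.cos (b y) * (Real.cos (b y) - Real.sqrt 3 * Real.sin (b y)))) with hg
  have hgan : AnalyticOnNhd ℝ g
      (Set.Ioo (-(2 / (3 * Real.sqrt 3))) (2 / (3 * Real.sqrt 3))) := by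
    intro y hy
    obtain ⟨g1, g2, g3, -⟩ := gb_geom y (b y) hy.1 hy.2 rfl
    have a1 : -1 < 3 * Real.sqrt 3 * y / 2 := by
      have h1 := hy.1
      rw [← neg_div, div_lt_iff₀ (by positivity)] at h1
      linarith
    have a2 : 3 * Real.sqrt 3 * y / 2 < 1 := by
      have h2 := hy.2
      rw [lt_div_iff₀ (by positivity)] at h2
      linarith
    have hasin : ContDiffAt ℝ ⊤ b y := by
      have : ContDiffAt ℝ ⊤ (fun y : ℝ => 3 * Real.sqrt 3 * y / 2) y := by fun_prop
      exact ((Real.contDiffAt_arcsin a1.ne' a2.ne).comp y this).div_const 3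
    have hcos : ContDiffAt ℝ ⊤ (fun y => Real.cos (b y)) y := hasin.cos
    have hsin : ContDiffAt ℝ ⊤ (fun y => Real.sin (b y)) y := hasin.sin
    apply ContDiffAt.analyticAt
    have hB : 3 / (Real.sqrt 3 * Real.cos (b y) - Real.sin (b y)) ^ 2 ≠ 0 := by positivity
    refine ContDiffAt.mul (ContDiffAt.exp (ContDiffAt.mul (ContDiffAt.log ?_ hB) contDiffAt_const)) ?_
    · exact contDiffAt_const.div (((contDiffAt_const.mul hcos).sub hsin).pow 2) (by positivity)
    · exact contDiffAt_const.div (hcos.mul (hcos.sub (contDiffAt_const.mul hsin))) (by positivity)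
  have h0 : (0 : ℝ) ∈ Set.Ioo (-(2 / (3 * Real.sqrt 3))) (2 / (3 * Real.sqrt 3)) :=
    ⟨by linarith, hρ0⟩
  have hgeq : ∀ y ∈ Set.Ioo (-(2 / (3 * Real.sqrt 3))) (2 / (3 * Real.sqrt 3)),
      (3 / (Real.sqrt 3 * Real.cos (b y) - Real.sin (b y)) ^ 2) ^ r
          * (1 / (Real.cos (b y) * (Real.cos (b y) - Real.sqrt 3 * Real.sin (b y)))) = g y := by
    intro y hy
    obtain ⟨g1, g2, g3, -⟩ := gb_geom y (b y) hy.1 hy.2 rfl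
    rw [Real.rpow_def_of_pos (by positivity)]
  have hev : p.sum =ᶠ[nhds 0] g := by
    have hb0 : b 0 = 0 := by simp [hbdef]
    have hbc : Continuous b := by
      have := Real.continuous_arcsin
      fun_prop
    have hcont : ContinuousAt
        (fun y => |3 / (Real.sqrt 3 * Real.cos (b y) - Real.sin (b y)) ^ 2 - 1|) 0 := by
      have : (Real.sqrt 3 * Real.cos (b 0) - Real.sin (b 0)) ^ 2 ≠ 0 := by
        rw [hb0]; simp
      have h1 : ContinuousAt (fun y => (Real.sqrt 3 * Real.cos (b y) - Real.sin (b y)) ^ 2) 0 := by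
        fun_prop
      exact ((continuousAt_const.div h1 this).sub continuousAt_const).abs
    have hlt := hcont.eventually_lt (continuousAt_const (y := ε)) (by
      simp only [hb0]; simpa [hsq] using hε)
    filter_upwards [hlt, Ioo_mem_nhds h0.1 h0.2] with y hy1 hy2
    rw [← hgeq y hy2]
    exact (hsum y hy2).unique (hloc y (b y) hy2.1 hy2.2 rfl hy1)
  have hEq := hfan.eqOn_of_preconnected_of_eventuallyEq hgan isPreconnected_Ioo h0 hev
  have hzm : z ∈ Set.Ioo (-(2 / (3 * Real.sqrt 3))) (2 / (3 * Real.sqrt 3)) :=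
    ⟨by linarith, hz⟩
  have hbz : β = b z := hβ
  rw [hbz, hgeq z hzm, ← hEq hzm]
  exact hsum z hzm
end
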